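/- If a shift space X ⊆ 𝒜^∞ has the d̄-shadowing property, then X is d̄_M-stable. -/

import Mathlib

open MeasureTheory Filter Topology

namespace DbarPaper

variable {A : Type} [Fintype A] [DecidableEq A] [Inhabited A]
  [TopologicalSpace A] [DiscreteTopology A]
  [MeasurableSpace A] [MeasurableSingletonClass A]

/-- The shift map on the full shift `𝒜^∞ = ℕ → A`. -/
def shift : (ℕ → A) → (ℕ → A) := fun x n => x (n + 1)

/-- A shift space: a nonempty, closed, shift-invariant subset of the full shift. -/
def ShiftSpace (X : Set (ℕ → A)) : Prop :=
  X.Nonempty ∧ IsClosed X ∧ ∀ x ∈ X, shift x ∈ X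

/-- The word `w` appears in the sequence `x`. -/
def occursIn (w : List A) (x : ℕ → A) : Prop :=
  ∃ i : ℕ, w = List.ofFn (fun k : Fin w.length => x (i + (k : ℕ)))

/-- The language of a set `X`: all finite words appearing in points of `X`. -/
def lang (X : Set (ℕ → A)) : Set (List A) := {w | ∃ x ∈ X, occursIn w x}

/-- Words of length `n` in the language of `X`. -/
def langN (n : ℕ) (X : Set (ℕ → A)) : Set (List A) := {w | w ∈ lang X ∧ w.length = n}

/-- The pseudometric `d̄` on the full shift. -/
noncomputable def dbar (x y : ℕ → A) : ℝ :=
  Filter.limsup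
    (fun n => (((Finset.range n).filter (fun j => x j ≠ y j)).card : ℝ) / (n : ℝ))
    Filter.atTop

/-- Hausdorff "distance" between two sets induced by a `ℝ`-valued distance. -/
noncomputable def hausdist {Z : Type*} (d : Z → Z → ℝ) (P Q : Set Z) : ℝ :=
  max (⨆ p : P, ⨅ q : Q, d p q) (⨆ q : Q, ⨅ p : P, d p q)

/-- A probability measure is shift-invariant. -/
def invariantPM (μ : ProbabilityMeasure (ℕ → A)) : Prop :=
  (μ : Measure (ℕ → A)).map shift = (μ : Measure (ℕ → A))

/-- `M_σ(X)`: shift-invariant Borel probability measures giving `X` full measure. -/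
def Msigma (X : Set (ℕ → A)) : Set (ProbabilityMeasure (ℕ → A)) :=
  {μ | invariantPM μ ∧ μ X = 1}

/-- `ξ` is a joining of `μ` and `ν`: a `σ×σ`-invariant measure on the product with
marginals `μ` and `ν`. -/
def IsJoining (ξ : Measure ((ℕ → A) × (ℕ → A))) (μ ν : ProbabilityMeasure (ℕ → A)) : Prop :=
  ξ.map (Prod.map shift shift) = ξ ∧
  ξ.map Prod.fst = (μ : Measure (ℕ → A)) ∧ ξ.map Prod.snd = (ν : Measure (ℕ → A))

/-- Ornstein's metric `d̄_M` on invariant measures. -/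
noncomputable def dbarM (μ ν : ProbabilityMeasure (ℕ → A)) : ℝ :=
  sInf {r : ℝ | ∃ ξ : Measure ((ℕ → A) × (ℕ → A)),
    IsJoining ξ μ ν ∧ r = (ξ {p | p.1 0 ≠ p.2 0}).toReal}

/-- `d̄_M`-stability of a shift space (Austin). -/
def DbarMStable (X : Set (ℕ → A)) : Prop :=
  ∀ ε : ℝ, 0 < ε → ∃ U : Set (ProbabilityMeasure (ℕ → A)), IsOpen U ∧ Msigma X ⊆ U ∧
    ∀ ν ∈ U, invariantPM ν → ∃ μ ∈ Msigma X, dbarM μ ν < ε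

/-- The infinite concatenation of a sequence of (nonempty) words. -/
def concatSeq (w : ℕ → List A) : ℕ → A := fun n =>
  ((List.ofFn (fun i : Fin (n + 1) => w (i : ℕ))).flatten).getD n default

/-- The `d̄`-shadowing property. -/
def DbarShadowing (X : Set (ℕ → A)) : Prop :=
  ∀ ε : ℝ, 0 < ε → ∃ N : ℕ, 0 < N ∧ ∀ w : ℕ → List A,
    (∀ j, w j ∈ lang X) → (∀ j, N ≤ (w j).length) →
    ∃ x' ∈ X, dbar (concatSeq w) x' < ε

/-- `U_n(X)`: the union of cylinders of words of length `n` in the language of `X`. -/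
def cylNbhd (X : Set (ℕ → A)) (n : ℕ) : Set (ℕ → A) :=
  {x | List.ofFn (fun k : Fin n => x (k : ℕ)) ∈ lang X}

/-- The `n`-th (topological) Markov approximation of `X`: all sequences whose subwords of
length `n+1` belong to the language of `X`. -/
def markovApprox (X : Set (ℕ → A)) (n : ℕ) : Set (ℕ → A) :=
  {x | ∀ i : ℕ, List.ofFn (fun k : Fin (n + 1) => x (i + (k : ℕ))) ∈ lang X}

/-- Transitivity, in terms of the language. -/
def TransitiveShift (X : Set (ℕ → A)) : Prop :=
  ∀ u ∈ lang X, ∀ w ∈ lang X, ∃ v : List A, u ++ v ++ w ∈ lang X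

/-- Topological mixing, in terms of the language. -/
def MixingShift (X : Set (ℕ → A)) : Prop :=
  ∀ u ∈ lang X, ∀ w ∈ lang X, ∃ N : ℕ, ∀ m : ℕ, N ≤ m →
    ∃ v : List A, v.length = m ∧ u ++ v ++ w ∈ lang X

/-- Chain mixing: all but finitely many Markov approximations are topologically mixing. -/
def ChainMixing (X : Set (ℕ → A)) : Prop :=
  ∃ N : ℕ, ∀ n : ℕ, N ≤ n → MixingShift (markovApprox X n)

/-- `C` is the measure center of `X`: the smallest shift space contained in `X` of full
measure for every invariant measure of `X`. -/
def IsMeasureCenter (X C : Set (ℕ → A)) : Prop :=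
  ShiftSpace C ∧ C ⊆ X ∧ (∀ μ ∈ Msigma X, μ C = 1) ∧
  ∀ Y : Set (ℕ → A), ShiftSpace Y → Y ⊆ X → (∀ μ ∈ Msigma X, μ Y = 1) → C ⊆ Y

/-- Measure of the cylinder determined by a word of length `n`. -/
noncomputable def cylMeasure (μ : ProbabilityMeasure (ℕ → A)) {n : ℕ} (w : Fin n → A) : ℝ :=
  ((μ : Measure (ℕ → A)) {x | ∀ k : Fin n, x (k : ℕ) = w k}).toReal

/-- Entropy of the partition into cylinders of length `n`. -/
noncomputable def blockEntropy (μ : ProbabilityMeasure (ℕ → A)) (n : ℕ) : ℝ :=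
  -∑ w : Fin n → A, cylMeasure μ w * Real.log (cylMeasure μ w)

/-- Kolmogorov–Sinai entropy of a shift-invariant measure. -/
noncomputable def ksEntropy (μ : ProbabilityMeasure (ℕ → A)) : ℝ :=
  Filter.limsup (fun n => blockEntropy μ n / (n : ℝ)) Filter.atTop

/-- `μ` is ergodic for the shift. -/
def ErgodicPM (μ : ProbabilityMeasure (ℕ → A)) : Prop :=
  Ergodic shift (μ : Measure (ℕ → A))

/-- Ergodic measures are entropy dense in `M_σ(X)`. -/
def EntropyDense (X : Set (ℕ → A)) : Prop :=
  ∀ μ ∈ Msigma X, ∀ U : Set (ProbabilityMeasure (ℕ → A)), IsOpen U → μ ∈ U →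
    ∀ ε : ℝ, 0 < ε →
      ∃ ν ∈ Msigma X, ν ∈ U ∧ ErgodicPM ν ∧ |ksEntropy ν - ksEntropy μ| < ε

/-- Topological entropy of a shift space. -/
noncomputable def topEntropy (X : Set (ℕ → A)) : ℝ :=
  Filter.limsup (fun n => Real.log (Nat.card ↥(langN n X)) / (n : ℝ)) Filter.atTop

/-- The standard metric on the full shift. -/
noncomputable def rho (x y : ℕ → A) : ℝ :=
  open scoped Classical in
  if x = y then 0 else (2 : ℝ) ^ (-((sInf {j : ℕ | x j ≠ y j} : ℕ) : ℤ))

/-- Proximality of a shift space. -/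
def ProximalShift (X : Set (ℕ → A)) : Prop :=
  ∀ x ∈ X, ∀ y ∈ X,
    Filter.liminf (fun n => rho (shift^[n] x) (shift^[n] y)) Filter.atTop = 0

/-- Minimality of a shift space. -/
def MinimalShift (X : Set (ℕ → A)) : Prop :=
  ShiftSpace X ∧ ∀ Y : Set (ℕ → A), ShiftSpace Y → Y ⊆ X → Y = X

/-- An `A`-labeled directed multigraph on vertices `V` with edges `E`. -/
structure LabeledGraph (A V E : Type*) where
  src : E → V
  dst : E → V
  lab : E → A

namespace LabeledGraph

variable {A' V E : Type*}

/-- `es` is a path in `G` from `u` to `v`. -/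
def PathFromTo (G : LabeledGraph A' V E) (es : List E) (u v : V) : Prop :=
  es.Chain' (fun e f => G.dst e = G.src f) ∧
  es.head?.map G.src = some u ∧ es.getLast?.map G.dst = some v

/-- `G` is strongly connected. -/
def StronglyConnected (G : LabeledGraph A' V E) : Prop :=
  ∀ u v : V, ∃ es : List E, G.PathFromTo es u v

/-- `d` is the period of `G`: the gcd of lengths of closed paths. -/
def HasPeriod (G : LabeledGraph A' V E) (d : ℕ) : Prop :=
  (∀ (es : List E) (u : V), G.PathFromTo es u u → d ∣ es.length) ∧
  ∀ d' : ℕ, (∀ (es : List E) (u : V), G.PathFromTo es u u → d' ∣ es.length) → d' ∣ d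

/-- `b` is a safe symbol for `G`. -/
def SafeSymbol (G : LabeledGraph A' V E) (b : A') : Prop :=
  ∀ e : E, ∃ e' : E, G.src e' = G.src e ∧ G.dst e' = G.dst e ∧ G.lab e' = b

/-- The shift space presented by the labeled graph `G`: labels read along infinite paths. -/
def presents (G : LabeledGraph A' V E) : Set (ℕ → A') :=
  {x | ∃ e : ℕ → E, (∀ j, G.dst (e j) = G.src (e (j + 1))) ∧ ∀ j, x j = G.lab (e j)}

end LabeledGraph

/-- The coupling of a family of labeled graphs: an edge labeled `a` from `v` to `v'` exists
iff each `G k` has an edge from `v k` to `v' k` labeled `a`. -/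
def coupling {A' : Type*} {n : ℕ} {V E : Fin n → Type*}
    (G : ∀ k, LabeledGraph A' (V k) (E k)) :
    LabeledGraph A' (∀ k, V k) {p : (∀ k, E k) × A' // ∀ k, (G k).lab (p.1 k) = p.2} where
  src p := fun k => (G k).src (p.1.1 k)
  dst p := fun k => (G k).dst (p.1.1 k)
  lab p := p.1.2

/-- Sofic shift spaces: those presented by some finite labeled graph. -/
def Sofic (X : Set (ℕ → A)) : Prop :=
  ∃ (V E : Type) (_ : Fintype V) (_ : Fintype E) (G : LabeledGraph A V E),
    X = G.presents

/-- The coded shift generated by a finite set of words `B`: the closure of the set of all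
shifts of infinite concatenations of words from `B`. -/
def codedShift (B : Finset (List A)) : Set (ℕ → A) :=
  closure {x | ∃ (b : ℕ → List A) (k : ℕ), (∀ i, b i ∈ B) ∧ x = shift^[k] (concatSeq b)}


set_option linter.unusedSectionVars false

lemma shift_iterate_apply (m : ℕ) (x : ℕ → A) (n : ℕ) : shift^[m] x n = x (n + m) := by
  induction m generalizing n with
  | zero => rfl
  | succ m ih => rw [Function.iterate_succ_apply', shift, ih]; congr 1; omega

lemma continuous_shift : Continuous (shift : (ℕ → A) → (ℕ → A)) :=
  continuous_pi fun n => continuous_apply (n + 1)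

lemma shift_iterate_mem_cylNbhd_iff (X : Set (ℕ → A)) (N m : ℕ) (x : ℕ → A) :
    shift^[m] x ∈ cylNbhd X N ↔ List.ofFn (fun k : Fin N => x (m + (k : ℕ))) ∈ lang X := by
  simp only [cylNbhd, Set.mem_ofPred_eq, shift_iterate_apply, add_comm m]

lemma ofFn_mem_lang {X : Set (ℕ → A)} {x : ℕ → A} (hx : x ∈ X) (m N : ℕ) :
    List.ofFn (fun k : Fin N => x (m + (k : ℕ))) ∈ lang X := by
  refine ⟨x, hx, m, ?_⟩
  apply List.ext_get <;> simp

lemma ShiftSpace.iterate_mem {X : Set (ℕ → A)} (hX : ShiftSpace X) {x : ℕ → A} (hx : x ∈ X)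
    (m : ℕ) : shift^[m] x ∈ X :=
  Set.MapsTo.iterate (f := shift) (s := X) (fun x hx => hX.2.2 x hx) m hx

lemma isClopen_cylNbhd (X : Set (ℕ → A)) (N : ℕ) : IsClopen (cylNbhd X N) := by
  have h : Continuous fun x : ℕ → A => fun k : Fin N => x k :=
    continuous_pi fun k => continuous_apply (k : ℕ)
  exact (isClopen_discrete {u : Fin N → A | List.ofFn u ∈ lang X}).preimage h

lemma concatSeq_blocks {N : ℕ} (hN : 0 < N) (y : ℕ → A) :
    concatSeq (fun i => List.ofFn (fun k : Fin N => y (i * N + (k : ℕ)))) = y := by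
  funext n
  have h := List.ofFn_mul (m := n + 1) (n := N) (fun j : Fin ((n + 1) * N) => y j)
  have hn : n < (n + 1) * N := by nlinarith
  simp only [concatSeq]
  simp only at h
  rw [← h, List.getD_eq_getElem _ _ (by simpa using hn)]
  simp

/-- Shadowing of finite concatenations of blocks of length `N`, with an explicit mismatch count. -/
lemma exists_shadow_of_blocks {X : Set (ℕ → A)} (hX : ShiftSpace X) {ε : ℝ} {N : ℕ} (hN : 0 < N)
    (hsh : ∀ w : ℕ → List A, (∀ j, w j ∈ lang X) → (∀ j, N ≤ (w j).length) →
      ∃ x' ∈ X, dbar (concatSeq w) x' < ε)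
    {k : ℕ} (hk : 0 < k) (y : ℕ → A)
    (hy : ∀ i < k, List.ofFn (fun r : Fin N => y (i * N + (r : ℕ))) ∈ lang X) :
    ∃ x' ∈ X, (Nat.count (fun j => x' j ≠ y j) (k * N) : ℝ) ≤ ε * (k * N : ℕ) := by
  set L := k * N with hL
  have hLpos : 0 < L := Nat.mul_pos hk hN
  set y' : ℕ → A := fun n => y (n % L) with hy'
  obtain ⟨x, hxX, hx⟩ := hsh (fun i => List.ofFn (fun r : Fin N => y' (i * N + (r : ℕ))))
    (fun i => by
      convert hy (i % k) (Nat.mod_lt _ hk) using 2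
      funext r
      have h1 : i % k * N + r < L := by
        have := Nat.mod_lt i hk
        have := r.2
        calc i % k * N + r < (i % k + 1) * N := by linarith
          _ ≤ k * N := Nat.mul_le_mul_right _ (by omega)
      have h2 : i * N + r = (i % k * N + r) + L * (i / k) := by
        conv_lhs => rw [← Nat.mod_add_div i k]
        rw [hL]; ring
      simp only [hy']
      rw [h2, Nat.add_mul_mod_self_left, Nat.mod_eq_of_lt h1])
    (fun i => by simp)
  rw [concatSeq_blocks hN] at hx
  by_contra! hcon
  have hblock : ∀ m : ℕ, ε * L ≤ Nat.count (fun j => y' (m * L + j) ≠ x (m * L + j)) L := by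
    intro m
    refine (hcon _ (hX.iterate_mem hxX (m * L))).le.trans (le_of_eq ?_)
    congr 1
    rw [Nat.count_eq_card_filter_range, Nat.count_eq_card_filter_range]
    congr 1
    refine Finset.filter_congr fun j hj => ?_
    rw [shift_iterate_apply, add_comm j, ne_comm]
    simp only [hy']
    rw [mul_comm m, Nat.mul_add_mod, Nat.mod_eq_of_lt (Finset.mem_range.mp hj)]
  have hcount : ∀ m : ℕ, m * (ε * L) ≤ Nat.count (fun j => y' j ≠ x j) (m * L) := by
    intro m
    induction m with
    | zero => simp
    | succ m ih =>
      rw [Nat.succ_mul, Nat.count_add]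
      push_cast
      have := hblock m
      linarith
  refine absurd hx (not_lt.mpr ?_)
  refine Filter.le_limsup_of_frequently_le ?_ ?_
  · rw [Filter.frequently_atTop]
    intro a
    refine ⟨(a + 1) * L, by nlinarith, ?_⟩
    have hpos : (0 : ℝ) < ((a + 1) * L : ℕ) := by positivity
    rw [le_div_iff₀ hpos, ← Nat.count_eq_card_filter_range]
    refine le_trans (le_of_eq ?_) (hcount (a + 1))
    push_cast
    ring
  · refine Filter.isBoundedUnder_of ⟨1, fun n => ?_⟩
    refine div_le_one_of_le₀ ?_ (Nat.cast_nonneg _)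
    exact_mod_cast (Finset.card_filter_le _ _).trans (Finset.card_range n).le

open scoped Classical in
lemma exists_shadow {X : Set (ℕ → A)} (hX : ShiftSpace X) {ε : ℝ} {N : ℕ} (hN : 0 < N)
    (hsh : ∀ w : ℕ → List A, (∀ j, w j ∈ lang X) → (∀ j, N ≤ (w j).length) →
      ∃ x' ∈ X, dbar (concatSeq w) x' < ε)
    {k : ℕ} (hk : 0 < k) (x : ℕ → A) :
    ∃ x' ∈ X, (((Finset.range (k * N)).filter fun j => x' j ≠ x j).card : ℝ) ≤
      N * ((Finset.range k).filter fun i => shift^[i * N] x ∈ (cylNbhd X N)ᶜ).card +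
        ε * (k * N : ℕ) := by
  obtain ⟨x₀, hx₀⟩ := hX.1
  set B := (Finset.range k).filter fun i => shift^[i * N] x ∈ (cylNbhd X N)ᶜ with hB
  set y : ℕ → A := fun n => if shift^[n / N * N] x ∈ cylNbhd X N then x n else x₀ (n % N) with hy
  obtain ⟨x', hx', hc⟩ := exists_shadow_of_blocks hX hN hsh hk y (by
    intro i _
    have hdiv : ∀ r : Fin N, (i * N + r) / N = i := fun r => by
      rw [mul_comm, Nat.mul_add_div hN, Nat.div_eq_of_lt r.2, add_zero]
    have hmod : ∀ r : Fin N, (i * N + r) % N = 0 + r := fun r => by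
      rw [mul_comm, Nat.mul_add_mod, Nat.mod_eq_of_lt r.2, zero_add]
    simp only [hy, hdiv, hmod]
    by_cases h : shift^[i * N] x ∈ cylNbhd X N
    · simp only [h, if_true]
      exact (shift_iterate_mem_cylNbhd_iff X N _ x).1 h
    · simp only [h, if_false]
      exact ofFn_mem_lang hx₀ 0 N)
  refine ⟨x', hx', ?_⟩
  rw [Nat.count_eq_card_filter_range] at hc
  have hsub : ((Finset.range (k * N)).filter fun j => x' j ≠ x j) ⊆
      (B ×ˢ Finset.range N).image (fun p => p.1 * N + p.2) ∪
        (Finset.range (k * N)).filter fun j => x' j ≠ y j := by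
    intro j hj
    rw [Finset.mem_filter, Finset.mem_range] at hj
    by_cases h : shift^[j / N * N] x ∈ cylNbhd X N
    · refine Finset.mem_union_right _ (Finset.mem_filter.2 ⟨Finset.mem_range.2 hj.1, ?_⟩)
      simpa only [hy, h, if_true] using hj.2
    · refine Finset.mem_union_left _ (Finset.mem_image.2 ⟨(j / N, j % N), ?_, Nat.div_add_mod' j N⟩)
      rw [Finset.mem_product, hB, Finset.mem_filter, Finset.mem_range, Finset.mem_range]
      exact ⟨⟨Nat.div_lt_of_lt_mul (by rw [mul_comm]; exact hj.1), h⟩, Nat.mod_lt _ hN⟩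
  have hcard := (Finset.card_le_card hsub).trans (Finset.card_union_le _ _)
  have himg : ((B ×ˢ Finset.range N).image (fun p => p.1 * N + p.2)).card ≤ N * B.card := by
    refine Finset.card_image_le.trans ?_
    rw [Finset.card_product, Finset.card_range, mul_comm]
  have : (((Finset.range (k * N)).filter fun j => x' j ≠ x j).card : ℝ) ≤
      N * B.card + ((Finset.range (k * N)).filter fun j => x' j ≠ y j).card := by
    exact_mod_cast hcard.trans (Nat.add_le_add_right himg _)
  linarith

open scoped Classical in
/-- The shadowing point can be chosen measurably, since it depends on finitely many symbols. -/
lemma exists_measurable_shadow {X : Set (ℕ → A)} (hX : ShiftSpace X) {ε : ℝ} {N : ℕ} (hN : 0 < N)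
    (hsh : ∀ w : ℕ → List A, (∀ j, w j ∈ lang X) → (∀ j, N ≤ (w j).length) →
      ∃ x' ∈ X, dbar (concatSeq w) x' < ε)
    {k : ℕ} (hk : 0 < k) :
    ∃ g : (ℕ → A) → (ℕ → A), Measurable g ∧ (∀ x, g x ∈ X) ∧ ∀ x,
      (((Finset.range (k * N)).filter fun j => g x j ≠ x j).card : ℝ) ≤
      N * ((Finset.range k).filter fun i => shift^[i * N] x ∈ (cylNbhd X N)ᶜ).card +
        ε * (k * N : ℕ) := by
  choose c hcX hc using exists_shadow hX hN hsh hk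
  set e : (Fin (k * N) → A) → (ℕ → A) :=
    fun u n => if h : n < k * N then u ⟨n, h⟩ else default with he
  set t : (ℕ → A) → (ℕ → A) := fun x => e fun r : Fin (k * N) => x r with ht
  have htx : ∀ x, ∀ j < k * N, t x j = x j := fun x j hj => by simp [ht, he, hj]
  refine ⟨fun x => c (t x), ?_, fun x => hcX _, fun x => ?_⟩
  · exact (Measurable.of_discrete (f := fun u => c (e u))).comp
      (measurable_pi_lambda (fun (x : ℕ → A) (r : Fin (k * N)) => x r)
        fun r => measurable_pi_apply (r : ℕ))
  · have h1 : ((Finset.range (k * N)).filter fun j => c (t x) j ≠ x j) =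
        (Finset.range (k * N)).filter fun j => c (t x) j ≠ t x j :=
      Finset.filter_congr fun j hj => by rw [htx x j (Finset.mem_range.1 hj)]
    have h2 : ((Finset.range k).filter fun i => shift^[i * N] x ∈ (cylNbhd X N)ᶜ) =
        (Finset.range k).filter fun i => shift^[i * N] (t x) ∈ (cylNbhd X N)ᶜ := by
      refine Finset.filter_congr fun i hi => ?_
      rw [Set.mem_compl_iff, Set.mem_compl_iff, shift_iterate_mem_cylNbhd_iff,
        shift_iterate_mem_cylNbhd_iff]
      have : (fun r : Fin N => t x (i * N + r)) = fun r : Fin N => x (i * N + r) := by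
        funext r
        refine htx x _ ?_
        have := Finset.mem_range.1 hi
        calc i * N + r < (i + 1) * N := by have := r.2; linarith
          _ ≤ k * N := Nat.mul_le_mul_right _ this
      rw [this]
    rw [h1, h2]
    exact hc (t x)

section Averages

open scoped ENNReal

variable {Ω : Type*} [MeasurableSpace Ω]

/-- The average of the first `L` push-forwards of `η` under `T`. -/
noncomputable def averageMeasure (T : Ω → Ω) (L : ℕ) (η : Measure Ω) : Measure Ω :=
  (L : ℝ≥0∞)⁻¹ • ∑ j ∈ Finset.range L, η.map T^[j]

lemma averageMeasure_apply {T : Ω → Ω} (hT : Measurable T) (L : ℕ) (η : Measure Ω) {S : Set Ω}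
    (hS : MeasurableSet S) :
    averageMeasure T L η S = (L : ℝ≥0∞)⁻¹ * ∑ j ∈ Finset.range L, η (T^[j] ⁻¹' S) := by
  simp only [averageMeasure, Measure.smul_apply, Measure.finsetSum_apply, smul_eq_mul]
  congr 1
  exact Finset.sum_congr rfl fun j _ => Measure.map_apply (hT.iterate j) hS

lemma averageMeasure_apply_eq_of_forall {T : Ω → Ω} (hT : Measurable T) {L : ℕ} (hL : 0 < L)
    (η : Measure Ω) {S : Set Ω} (hS : MeasurableSet S) {a : ℝ≥0∞}
    (h : ∀ j, η (T^[j] ⁻¹' S) = a) : averageMeasure T L η S = a := by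
  rw [averageMeasure_apply hT L η hS, Finset.sum_congr rfl fun j _ => h j, Finset.sum_const,
    Finset.card_range, nsmul_eq_mul, ← mul_assoc, ENNReal.inv_mul_cancel (by simpa using hL.ne')
      (by simp), one_mul]

lemma isProbabilityMeasure_averageMeasure {T : Ω → Ω} (hT : Measurable T) {L : ℕ} (hL : 0 < L)
    (η : Measure Ω) [IsProbabilityMeasure η] : IsProbabilityMeasure (averageMeasure T L η) :=
  ⟨averageMeasure_apply_eq_of_forall hT hL η MeasurableSet.univ fun j => by simp⟩

lemma continuous_probabilityMeasure_apply [TopologicalSpace Ω] [OpensMeasurableSpace Ω]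
    [HasOuterApproxClosed Ω] {S : Set Ω} (hS : IsClopen S) :
    Continuous fun μ : ProbabilityMeasure Ω => μ S := by
  refine continuous_iff_continuousAt.2 fun μ => ?_
  refine ProbabilityMeasure.tendsto_measure_of_null_frontier_of_tendsto tendsto_id ?_
  simp [hS.frontier_eq]

variable [TopologicalSpace Ω] [BorelSpace Ω]

lemma abs_integral_map_averageMeasure_sub_le {T : Ω → Ω} (hT : Continuous T) {L : ℕ} (hL : 0 < L)
    (η : Measure Ω) [IsProbabilityMeasure η] (f : BoundedContinuousFunction Ω ℝ) :
    |∫ x, f x ∂((averageMeasure T L η).map T) - ∫ x, f x ∂(averageMeasure T L η)| ≤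
      2 * ‖f‖ / L := by
  have hf : ∀ ρ : Measure Ω, ∀ [IsProbabilityMeasure ρ], |∫ x, f x ∂ρ| ≤ ‖f‖ := fun ρ _ => by
    simpa using f.norm_integral_le_norm ρ
  have hprob : ∀ j, IsProbabilityMeasure (η.map T^[j]) := fun j =>
    Measure.isProbabilityMeasure_map (hT.iterate j).measurable.aemeasurable
  have key : ∀ h : BoundedContinuousFunction Ω ℝ, ∫ x, h x ∂(averageMeasure T L η) =
      (L : ℝ)⁻¹ * ∑ j ∈ Finset.range L, ∫ x, h x ∂(η.map T^[j]) := by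
    intro h
    rw [averageMeasure, integral_smul_measure, integral_finsetSum_measure]
    · simp
    · exact fun j _ => h.integrable _
  have hstep : ∀ j, ∫ x, f (T x) ∂(η.map T^[j]) = ∫ x, f x ∂(η.map T^[j + 1]) := by
    intro j
    rw [Function.iterate_succ', ← Measure.map_map hT.measurable (hT.iterate j).measurable,
      integral_map hT.measurable.aemeasurable f.continuous.aestronglyMeasurable]
  rw [integral_map hT.measurable.aemeasurable f.continuous.aestronglyMeasurable]
  have h1 := key (f.compContinuous ⟨T, hT⟩)
  simp only [BoundedContinuousFunction.compContinuous_apply, ContinuousMap.coe_mk, hstep] at h1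
  rw [h1, key f, ← mul_sub, ← Finset.sum_sub_distrib,
    Finset.sum_range_sub (fun j => ∫ x, f x ∂(η.map T^[j])), abs_mul, abs_inv, Nat.abs_cast,
    div_eq_inv_mul]
  gcongr
  have h2 := hf (η.map T^[L])
  have h3 := hf (η.map T^[0])
  rw [abs_le] at *
  constructor <;> linarith

/-- Weak limits of averages along `T` are `T`-invariant. -/
lemma map_eq_of_tendsto_averageMeasure [HasOuterApproxClosed Ω] {T : Ω → Ω} (hT : Continuous T)
    {ι : Type*} {F : Filter ι} [F.NeBot] {L : ι → ℕ} (hL : ∀ i, 0 < L i) (hLF : Tendsto L F atTop)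
    (η : ι → Measure Ω) [∀ i, IsProbabilityMeasure (η i)] {ξs : ι → ProbabilityMeasure Ω}
    (hξs : ∀ i, (ξs i : Measure Ω) = averageMeasure T (L i) (η i)) {ξ : ProbabilityMeasure Ω}
    (hξ : Tendsto ξs F (𝓝 ξ)) : (ξ : Measure Ω).map T = ξ := by
  have : IsProbabilityMeasure ((ξ : Measure Ω).map T) :=
    Measure.isProbabilityMeasure_map hT.measurable.aemeasurable
  refine ext_of_forall_integral_eq_of_IsFiniteMeasure fun f => ?_
  have h1 := ProbabilityMeasure.tendsto_iff_forall_integral_tendsto.1 hξ f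
  have h2 := ProbabilityMeasure.tendsto_iff_forall_integral_tendsto.1
    (ProbabilityMeasure.tendsto_map_of_tendsto_of_continuous _ _ hξ hT) f
  simp only [ProbabilityMeasure.toMeasure_map _ hT.measurable.aemeasurable] at h2
  have h3 : Tendsto (fun i => 2 * ‖f‖ / (L i : ℝ)) F (𝓝 0) :=
    (tendsto_natCast_atTop_atTop.comp hLF).const_div_atTop _
  have h4 : Tendsto (fun i => ∫ x, f x ∂(Measure.map T (ξs i : Measure Ω)) -
      ∫ x, f x ∂(ξs i : Measure Ω)) F (𝓝 0) := squeeze_zero_norm (fun i => by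
    rw [Real.norm_eq_abs, hξs i]
    exact abs_integral_map_averageMeasure_sub_le hT (hL i) (η i) f) h3
  exact sub_eq_zero.1 (tendsto_nhds_unique (h2.sub h1) h4)

end Averages

open scoped ENNReal

open scoped Classical in
lemma sum_measure_eq_lintegral_card {Ω ι : Type*} [MeasurableSpace Ω] (ν : Measure Ω)
    (s : Finset ι) {S : ι → Set Ω} (hS : ∀ j, MeasurableSet (S j)) :
    ∑ j ∈ s, ν (S j) = ∫⁻ x, ((s.filter fun j => x ∈ S j).card : ℝ≥0∞) ∂ν := by
  have h : ∀ x, ((s.filter fun j => x ∈ S j).card : ℝ≥0∞) =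
      ∑ j ∈ s, (S j).indicator (1 : Ω → ℝ≥0∞) x := by
    intro x
    simp [Set.indicator_apply]
  simp_rw [h]
  rw [lintegral_finsetSum _ fun j _ => measurable_one.indicator (hS j)]
  exact Finset.sum_congr rfl fun j _ => (lintegral_indicator_one (hS j)).symm

lemma measurableSet_ne_coord (i j : ℕ) :
    MeasurableSet {p : (ℕ → A) × (ℕ → A) | p.1 i ≠ p.2 j} := by
  have h1 : Measurable fun p : (ℕ → A) × (ℕ → A) => p.1 i := by fun_prop
  have h2 : Measurable fun p : (ℕ → A) × (ℕ → A) => p.2 j := by fun_prop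
  exact (measurableSet_eq_fun h1 h2).compl

open scoped Classical in
lemma averageMeasure_mismatch_le {C : Set (ℕ → A)} (hC : MeasurableSet C)
    {ν : ProbabilityMeasure (ℕ → A)} (hν : invariantPM ν) {ε : ℝ} (hε : 0 ≤ ε) {N k : ℕ}
    (hN : 0 < N) (hk : 0 < k) {g : (ℕ → A) → (ℕ → A)} (hg : Measurable g)
    (hgC : ∀ x, (((Finset.range (k * N)).filter fun j => g x j ≠ x j).card : ℝ) ≤
      N * ((Finset.range k).filter fun i => shift^[i * N] x ∈ C).card + ε * (k * N : ℕ)) :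
    averageMeasure (Prod.map shift shift) (k * N) ((ν : Measure (ℕ → A)).map fun x => (g x, x))
      {p | p.1 0 ≠ p.2 0} ≤ (ν : Measure (ℕ → A)) C + ENNReal.ofReal ε := by
  have hσ : Measurable (shift : (ℕ → A) → (ℕ → A)) := continuous_shift.measurable
  have hpair : Measurable fun x : ℕ → A => (g x, x) := hg.prodMk measurable_id
  have hmp : MeasurePreserving shift (ν : Measure (ℕ → A)) ν := ⟨hσ, hν⟩
  have hpre : ∀ j, ((ν : Measure (ℕ → A)).map fun x => (g x, x))
      ((Prod.map shift shift)^[j] ⁻¹' {p : (ℕ → A) × (ℕ → A) | p.1 0 ≠ p.2 0}) =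
      (ν : Measure (ℕ → A)) {x | g x j ≠ x j} := by
    intro j
    rw [Measure.map_apply hpair
      (((hσ.prodMap hσ).iterate j) (measurableSet_ne_coord 0 0))]
    congr 1
    ext x
    simp [Prod.map_iterate, shift_iterate_apply]
  have hL0 : ((k * N : ℕ) : ℝ≥0∞) ≠ 0 := by exact_mod_cast (Nat.mul_pos hk hN).ne'
  rw [averageMeasure_apply (hσ.prodMap hσ) _ _ (measurableSet_ne_coord 0 0),
    ENNReal.inv_mul_le_iff hL0 (ENNReal.natCast_ne_top _)]
  simp_rw [hpre]
  rw [sum_measure_eq_lintegral_card (ν : Measure (ℕ → A)) _ (S := fun j => {x | g x j ≠ x j})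
    fun j => hpair (measurableSet_ne_coord j j)]
  calc _ ≤ ∫⁻ x, ((N : ℝ≥0∞) * (((Finset.range k).filter fun i => x ∈ shift^[i * N] ⁻¹' C).card) +
          ENNReal.ofReal ε * (k * N : ℕ)) ∂(ν : Measure (ℕ → A)) := by
        refine lintegral_mono fun x => ?_
        have := ENNReal.ofReal_le_ofReal (hgC x)
        rw [ENNReal.ofReal_add (by positivity) (by positivity),
          ENNReal.ofReal_mul (by positivity), ENNReal.ofReal_mul hε] at this
        simp only [ENNReal.ofReal_natCast] at this
        simp only [Set.mem_preimage]
        convert this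
    _ = N * (k * (ν : Measure (ℕ → A)) C) + ENNReal.ofReal ε * (k * N : ℕ) := by
        rw [lintegral_add_right _ measurable_const, lintegral_const_mul' _ _ (by simp),
          ← sum_measure_eq_lintegral_card _ _ fun i => (hσ.iterate (i * N)) hC]
        simp_rw [fun i : ℕ => (hmp.iterate (i * N)).measure_preimage hC.nullMeasurableSet]
        simp
    _ = (k * N : ℕ) * ((ν : Measure (ℕ → A)) C + ENNReal.ofReal ε) := by
        push_cast
        ring

/-- An invariant measure nearly supported on blocks of `X` is `d̄_M`-close to a measure on `X`. -/
lemma exists_dbarM_le {X : Set (ℕ → A)} (hX : ShiftSpace X) {ε : ℝ} (hε : 0 ≤ ε) {N : ℕ}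
    (hN : 0 < N) (hsh : ∀ w : ℕ → List A, (∀ j, w j ∈ lang X) → (∀ j, N ≤ (w j).length) →
      ∃ x' ∈ X, dbar (concatSeq w) x' < ε)
    {ν : ProbabilityMeasure (ℕ → A)} (hν : invariantPM ν) :
    ∃ μ ∈ Msigma X, dbarM μ ν ≤ ν (cylNbhd X N)ᶜ + ε := by
  classical
  set T : (ℕ → A) × (ℕ → A) → (ℕ → A) × (ℕ → A) := Prod.map shift shift with hT
  have hTj : ∀ j x y, T^[j] (x, y) = (shift^[j] x, shift^[j] y) := fun j x y => by
    rw [hT, Prod.map_iterate]; rfl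
  have hσc : Continuous (shift : (ℕ → A) → (ℕ → A)) := continuous_shift
  have hTc : Continuous T := hσc.prodMap hσc
  have hσ := hσc.measurable
  have hCm : MeasurableSet (cylNbhd X N)ᶜ := (isClopen_cylNbhd X N).isOpen.measurableSet.compl
  have hXm : MeasurableSet X := hX.2.1.measurableSet
  choose g hg hgX hgC using
    fun k : ℕ => exists_measurable_shadow hX hN hsh (k := k + 1) k.succ_pos
  have hpair : ∀ k, Measurable fun x : ℕ → A => (g k x, x) := fun k =>
    (hg k).prodMk measurable_id
  set η : ℕ → Measure ((ℕ → A) × (ℕ → A)) := fun k =>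
    (ν : Measure (ℕ → A)).map fun x => (g k x, x) with hη
  have hηp : ∀ k, IsProbabilityMeasure (η k) := fun k =>
    Measure.isProbabilityMeasure_map (hpair k).aemeasurable
  have hL : ∀ k : ℕ, 0 < (k + 1) * N := fun k => Nat.mul_pos k.succ_pos hN
  set ξs : ℕ → ProbabilityMeasure ((ℕ → A) × (ℕ → A)) := fun k => ⟨averageMeasure T ((k + 1) * N) (η k),
    isProbabilityMeasure_averageMeasure hTc.measurable (hL k) (η k)⟩
  obtain ⟨ξ, -, hξ⟩ := isCompact_univ.ultrafilter_le_nhds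
    ((hyperfilter ℕ).map ξs) (by simp)
  replace hξ : Tendsto ξs (hyperfilter ℕ : Filter ℕ) (𝓝 ξ) := hξ
  have hinv : (ξ : Measure ((ℕ → A) × (ℕ → A))).map T = ξ := by
    refine map_eq_of_tendsto_averageMeasure hTc hL ?_ η (fun _ => rfl) hξ
    refine (tendsto_atTop_mono (fun k => ?_) tendsto_id).mono_left Nat.hyperfilter_le_atTop
    simp only [id]
    nlinarith
  have hsnd : (ξ : Measure ((ℕ → A) × (ℕ → A))).map Prod.snd = ν := by
    have h1 := ProbabilityMeasure.tendsto_map_of_tendsto_of_continuous _ _ hξ continuous_snd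
    have h2 : ∀ k, (ξs k).map (f := Prod.snd) measurable_snd.aemeasurable = ν := by
      intro k
      apply Subtype.ext
      rw [ProbabilityMeasure.val_eq_to_measure, ProbabilityMeasure.toMeasure_map]
      ext S hS
      rw [Measure.map_apply measurable_snd hS]
      refine averageMeasure_apply_eq_of_forall hTc.measurable (hL k) (η k) (measurable_snd hS)
        fun j => ?_
      have hmp : MeasurePreserving shift (ν : Measure (ℕ → A)) ν := ⟨hσ, hν⟩
      rw [hη, Measure.map_apply (hpair k) ((hTc.measurable.iterate j) (measurable_snd hS))]
      refine Eq.trans ?_ ((hmp.iterate j).measure_preimage hS.nullMeasurableSet)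
      congr 1
      ext x
      simp [hTj]
    simp_rw [h2] at h1
    have := congrArg (fun ρ : ProbabilityMeasure (ℕ → A) => (ρ : Measure (ℕ → A)))
      (tendsto_nhds_unique tendsto_const_nhds h1)
    rw [this, ProbabilityMeasure.toMeasure_map]
  set μ : ProbabilityMeasure (ℕ → A) := ξ.map (f := Prod.fst) measurable_fst.aemeasurable
  have hμξ : (μ : Measure (ℕ → A)) = (ξ : Measure ((ℕ → A) × (ℕ → A))).map Prod.fst :=
    ProbabilityMeasure.toMeasure_map _ _
  have hμinv : invariantPM μ := by
    rw [invariantPM, hμξ, Measure.map_map hσ measurable_fst]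
    conv_rhs => rw [← hinv, Measure.map_map measurable_fst hTc.measurable]
    rfl
  have hμX : μ X = 1 := by
    have h1 : (ξ : Measure ((ℕ → A) × (ℕ → A))) (Prod.fst ⁻¹' X)ᶜ ≤ 0 := by
      refine (ProbabilityMeasure.le_liminf_measure_open_of_tendsto hξ
        (hX.2.1.preimage continuous_fst).isOpen_compl).trans (le_of_eq ?_)
      have : ∀ k, (ξs k : Measure ((ℕ → A) × (ℕ → A))) (Prod.fst ⁻¹' X)ᶜ = 0 := by
        intro k
        refine averageMeasure_apply_eq_of_forall hTc.measurable (hL k) (η k)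
          (measurable_fst hXm).compl fun j => ?_
        rw [hη, Measure.map_apply (hpair k)
          ((hTc.measurable.iterate j) (measurable_fst hXm).compl)]
        convert measure_empty (μ := (ν : Measure (ℕ → A)))
        ext x
        simpa [hTj] using hX.iterate_mem (hgX k x) j
      simp [this]
    have h2 : (μ : Measure (ℕ → A)) Xᶜ = 0 := by
      rw [hμξ, Measure.map_apply measurable_fst hXm.compl]
      exact le_antisymm h1 zero_le
    have h3 := (prob_compl_eq_zero_iff hXm).1 h2
    rw [← ProbabilityMeasure.ennreal_coeFn_eq_coeFn_toMeasure] at h3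
    exact_mod_cast h3
  refine ⟨μ, ⟨hμinv, hμX⟩, ?_⟩
  have hclopen : IsClopen {p : (ℕ → A) × (ℕ → A) | p.1 0 ≠ p.2 0} := by
    have : Continuous fun p : (ℕ → A) × (ℕ → A) => (p.1 0, p.2 0) := by fun_prop
    exact (isClopen_discrete {q : A × A | q.1 ≠ q.2}).preimage this
  have hcost : (ξ : Measure ((ℕ → A) × (ℕ → A))) {p | p.1 0 ≠ p.2 0} ≤
      (ν : Measure (ℕ → A)) (cylNbhd X N)ᶜ + ENNReal.ofReal ε := by
    refine (ProbabilityMeasure.le_liminf_measure_open_of_tendsto hξ hclopen.isOpen).trans ?_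
    refine Filter.liminf_le_of_frequently_le' (Eventually.frequently (Eventually.of_forall ?_))
    intro k
    exact averageMeasure_mismatch_le hCm hν hε hN k.succ_pos (hg k) fun x => by
      convert hgC k x
  have hle : dbarM μ ν ≤ ((ξ : Measure ((ℕ → A) × (ℕ → A))) {p | p.1 0 ≠ p.2 0}).toReal := by
    refine csInf_le ⟨0, ?_⟩ ⟨ξ, ⟨hinv, hμξ.symm, hsnd⟩, rfl⟩
    rintro r ⟨_, _, rfl⟩
    exact ENNReal.toReal_nonneg
  refine hle.trans ((ENNReal.toReal_mono (by finiteness) hcost).trans (le_of_eq ?_))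
  rw [ENNReal.toReal_add (by finiteness) (by finiteness), ENNReal.toReal_ofReal hε]
  rfl

/-- `d̄`-shadowing implies `d̄_M`-stability. -/
theorem statement1 (hA : 2 ≤ Fintype.card A) (X : Set (ℕ → A)) (hX : ShiftSpace X)
    (hshad : DbarShadowing X) : DbarMStable X := by
  intro ε hε
  obtain ⟨N, hN, hsh⟩ := hshad (ε / 2) (half_pos hε)
  have hclopen := (isClopen_cylNbhd X N).compl
  refine ⟨{ν | (ν (cylNbhd X N)ᶜ : ℝ) < ε / 2}, ?_, ?_, ?_⟩
  · exact isOpen_lt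
      (NNReal.continuous_coe.comp (continuous_probabilityMeasure_apply hclopen)) continuous_const
  · rintro μ ⟨-, hμX⟩
    have h1 : (μ : Measure (ℕ → A)) X = 1 := by
      rw [← ProbabilityMeasure.ennreal_coeFn_eq_coeFn_toMeasure, hμX, ENNReal.coe_one]
    have hsub : (cylNbhd X N)ᶜ ⊆ Xᶜ := Set.compl_subset_compl.2 fun x hx => by
      simpa [cylNbhd] using ofFn_mem_lang hx 0 N
    have h2 : (μ : Measure (ℕ → A)) (cylNbhd X N)ᶜ = 0 :=
      measure_mono_null hsub ((prob_compl_eq_zero_iff hX.2.1.measurableSet).2 h1)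
    have h3 : μ (cylNbhd X N)ᶜ = 0 := (μ.null_iff_toMeasure_null _).2 h2
    simp only [Set.mem_ofPred_eq, h3, NNReal.coe_zero]
    exact half_pos hε
  · intro ν hν hinv
    obtain ⟨μ, hμ, hle⟩ := exists_dbarM_le hX (half_pos hε).le hN hsh hinv
    rw [Set.mem_ofPred_eq] at hν
    exact ⟨μ, hμ, by linarith⟩

end DbarPaper
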